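/- arXiv:1907.07600 — 2 statements merged into one kernel-verified Lean document; each statement's English description precedes it below -/
import Mathlib

section
/- Let a ∈ (0,1), n̂ > 0, p* ∈ ℝⁿ, and let {p[k]}_{k≥0} be a sequence in ℝⁿ and {z[k]}_{k≥0} a sequence of vectors such that ‖p[k] − p*‖₂ ≤ ‖z[k]‖₂ for all k ≥ 0 (e.g., z[k] = (p[k] − p*, λ̂[k] − λ*)). Define δ[0] arbitrary in ℝⁿ and δ[k] := n̂(p[k] − p[k−1]) for k ≥ 1. Then for every K ≥ 0: ‖δ‖₂^{a,K} ≤ (2n̂/a)·‖z‖₂^{a,K} + ‖δ[0]‖₂. -/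
/-- Euclidean norm of a vector in ℝ^d. -/
noncomputable def eunorm {d : ℕ} (x : Fin d → ℝ) : ℝ := Real.sqrt (∑ i, (x i) ^ 2)

/-- The weighted norm ‖x‖₂^{a,K} = max_{0 ≤ k ≤ K} a^{-k} ‖x[k]‖₂. -/
noncomputable def wnormSeq {d : ℕ} (a : ℝ) (x : ℕ → Fin d → ℝ) (K : ℕ) : ℝ :=
  (Finset.range (K + 1)).sup' (Finset.nonempty_range_iff.mpr (Nat.succ_ne_zero K))
    fun k => eunorm (x k) / a ^ k

/-!
Inserting `p*` between consecutive iterates gives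
`‖δ[k+1]‖ ≤ n̂ (‖z[k+1]‖ + ‖z[k]‖) ≤ n̂ (a^(k+1) + a^k) ‖z‖^{a,K} = n̂ (1 + a⁻¹) a^(k+1) ‖z‖^{a,K}`,
so shifting the index by one costs a factor `a⁻¹`; for `a ≤ 1` one has `1 + a⁻¹ ≤ 2 / a`.
-/

section WeightedNorm

variable {E F : Type*} {a : ℝ} {K : ℕ}

/-- The exponentially weighted norm `max_{0 ≤ k ≤ K} a^{-k} ‖x[k]‖` of a sequence in a normed space,
of which `wnormSeq` is the Euclidean case. -/
noncomputable def weightedNorm [Norm E] (a : ℝ) (x : ℕ → E) (K : ℕ) : ℝ :=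
  (Finset.range (K + 1)).sup' Finset.nonempty_range_add_one fun k => ‖x k‖ / a ^ k

theorem weightedNorm_le_iff [Norm E] (ha : 0 < a) {x : ℕ → E} {C : ℝ} :
    weightedNorm a x K ≤ C ↔ ∀ k ≤ K, ‖x k‖ ≤ C * a ^ k := by
  simp only [weightedNorm, Finset.sup'_le_iff, Finset.mem_range_succ_iff,
    div_le_iff₀ (pow_pos ha _)]

theorem norm_le_weightedNorm_mul_pow [Norm E] (ha : 0 < a) (x : ℕ → E) {k : ℕ} (hk : k ≤ K) :
    ‖x k‖ ≤ weightedNorm a x K * a ^ k :=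
  (weightedNorm_le_iff ha).1 le_rfl k hk

theorem weightedNorm_nonneg [SeminormedAddGroup E] (ha : 0 < a) (x : ℕ → E) :
    0 ≤ weightedNorm a x K := by
  simpa only [pow_zero, mul_one] using
    (norm_nonneg (x 0)).trans (norm_le_weightedNorm_mul_pow ha x K.zero_le)

theorem stmt10_general {𝕜 : Type*} [NormedField 𝕜] [SeminormedAddCommGroup E] [NormedSpace 𝕜 E]
    [Norm F] (ha : 0 < a) (c : 𝕜) {pstar : E} {p : ℕ → E} {z : ℕ → F}
    (hpz : ∀ k, ‖p k - pstar‖ ≤ ‖z k‖) {δ : ℕ → E}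
    (hδ : ∀ k, δ (k + 1) = c • (p (k + 1) - p k)) (K : ℕ) :
    weightedNorm a δ K ≤ max (‖c‖ * (1 + a⁻¹) * weightedNorm a z K) ‖δ 0‖ := by
  refine (weightedNorm_le_iff ha).2 fun k hk => ?_
  rcases k with _ | k
  · simp only [pow_zero, mul_one, le_max_right]
  · set W := weightedNorm a z K
    have hstep : ‖p (k + 1) - p k‖ ≤ (1 + a⁻¹) * W * a ^ (k + 1) := calc
      ‖p (k + 1) - p k‖ ≤ ‖p (k + 1) - pstar‖ + ‖p k - pstar‖ := by
        simpa only [dist_eq_norm] using dist_triangle_right (p (k + 1)) (p k) pstar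
      _ ≤ ‖z (k + 1)‖ + ‖z k‖ := add_le_add (hpz (k + 1)) (hpz k)
      _ ≤ W * a ^ (k + 1) + W * a ^ k :=
        add_le_add (norm_le_weightedNorm_mul_pow ha z hk)
          (norm_le_weightedNorm_mul_pow ha z (k.le_succ.trans hk))
      _ = (1 + a⁻¹) * W * a ^ (k + 1) := by rw [pow_succ]; field_simp
    calc ‖δ (k + 1)‖ = ‖c‖ * ‖p (k + 1) - p k‖ := by rw [hδ, norm_smul]
      _ ≤ ‖c‖ * ((1 + a⁻¹) * W * a ^ (k + 1)) := by gcongr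
      _ = ‖c‖ * (1 + a⁻¹) * W * a ^ (k + 1) := by ring
      _ ≤ max (‖c‖ * (1 + a⁻¹) * W) ‖δ 0‖ * a ^ (k + 1) := by
        gcongr
        exact le_max_left _ _

end WeightedNorm

theorem max_mul_one_add_inv_le {a c W D : ℝ} (ha : a ∈ Set.Ioc 0 1) (hc : 0 ≤ c) (hW : 0 ≤ W)
    (hD : 0 ≤ D) : max (c * (1 + a⁻¹) * W) D ≤ 2 * c / a * W + D := by
  have ha₀ : 0 < a := ha.1
  have hinv : 1 ≤ a⁻¹ := (one_le_inv₀ ha₀).2 ha.2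
  calc max (c * (1 + a⁻¹) * W) D ≤ c * (1 + a⁻¹) * W + D := max_le_add_of_nonneg (by positivity) hD
    _ ≤ c * (a⁻¹ + a⁻¹) * W + D := by gcongr
    _ = 2 * c / a * W + D := by ring

theorem eunorm_eq_norm_toLp {d : ℕ} (x : Fin d → ℝ) : eunorm x = ‖WithLp.toLp 2 x‖ := by
  simp only [eunorm, EuclideanSpace.norm_eq, Real.norm_eq_abs, sq_abs]

theorem wnormSeq_eq_weightedNorm_toLp {d : ℕ} (a : ℝ) (x : ℕ → Fin d → ℝ) (K : ℕ) :
    wnormSeq a x K = weightedNorm a (fun k => WithLp.toLp 2 (x k)) K := by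
  simp only [wnormSeq, weightedNorm, eunorm_eq_norm_toLp]

theorem stmt10 {n d : ℕ} (a : ℝ) (ha : a ∈ Set.Ioo (0 : ℝ) 1)
    (nhat : ℝ) (hnhat : 0 < nhat)
    (pstar : Fin n → ℝ) (p : ℕ → Fin n → ℝ) (z : ℕ → Fin d → ℝ)
    (hpz : ∀ k : ℕ, eunorm (fun i => p k i - pstar i) ≤ eunorm (z k))
    (δ : ℕ → Fin n → ℝ)
    (hδ : ∀ k : ℕ, δ (k + 1) = fun i => nhat * (p (k + 1) i - p k i)) :
    ∀ K : ℕ, wnormSeq a δ K ≤ (2 * nhat / a) * wnormSeq a z K + eunorm (δ 0) := by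
  intro K
  simp only [eunorm_eq_norm_toLp, wnormSeq_eq_weightedNorm_toLp] at hpz ⊢
  refine (stmt10_general (p := fun k => WithLp.toLp 2 (p k)) ha.1 nhat hpz
    (fun k => congrArg (WithLp.toLp 2) (hδ k)) K).trans ?_
  rw [Real.norm_of_nonneg hnhat.le]
  exact max_mul_one_add_inv_le ⟨ha.1, ha.2.le⟩ hnhat.le (weightedNorm_nonneg ha.1 _) (norm_nonneg _)
end

section
/- (Proposition 5) Let each f_i : ℝ → ℝ (i = 1,…,n) be twice continuously differentiable with f_i''(x) ≥ m > 0 for all x ∈ [p̲_i, p̄_i]. Let {P[k]}_{k≥0} be n×n column-stochastic matrices with P_{ij}[k] = 1/D_j⁺[k] if j transmits to i at time k or j = i (where D_j⁺[k] ≤ n is node j's instantaneous out-degree including itself) and P_{ij}[k] = 0 otherwise, and suppose there exists a positive integer B such that the union of the communication digraphs over each window {kB, …, (k+1)B − 1} is strongly connected. Consider the iterates p_i[k+1] = Proj_{[p̲_i,p̄_i]}(p_i[k] − s f_i'(p_i[k]) + sξx_i[k]), λ[k+1] = P[k](λ[k] − s·y[k]), v[k+1] = P[k]v[k] with v[0]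 = 𝟙, x[k+1] = diag(v[k+1])^{−1}λ[k+1], y[k+1] = P[k]y[k] + n̂(p[k+1] − p[k]) with y[0] = n̂(p[0] − ℓ), and set e[k] := x[k] − (1/n)(𝟙ᵀλ[k])𝟙 and z[k] := (p[k] − p*, (1/n̂)𝟙ᵀλ[k] − λ*), where (p*, λ*) is the equilibrium of the nominal system. Then there exist a ∈ (0,1), s̄ > 0, α2 > 0 and β2 ≥ 0 (β2 depending on initial conditions) such that for every s ∈ (0, s̄) and every K ≥ 0: ‖e‖₂^{a,K} ≤ s·α2·‖z‖₂^{a,K} + β2. -/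
open Matrix

/-- Projection of `x` onto the interval `[lo, hi]`. -/
noncomputable def projI (lo hi x : ℝ) : ℝ := max lo (min hi x)

/-
Dividing by the push-sum weights `v` turns the column-stochastic recursions for `y` and `lam` into
perturbed consensus recursions `u[k+1] = Q[k] u[k] + d[k]` with row-stochastic
`Q[k] = diag(v[k+1])⁻¹ P[k] diag(v[k])`, whose entries on the edges and on the diagonal are bounded
below because `v` is. Over `n` windows every node reaches every other one, so the product of the
`Q[k]` has all entries at least some `δ > 0` and contracts oscillations by `1 - δ`. Hence a
disturbance of size `O(a ^ k)` produces an oscillation of size `O(a ^ k)`. This is used twice: from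
the increments of `p` to `y / v`, and from `-s (y / v)` to `lam / v`, the second use giving the
factor `s`. Finally `1/n ∑ lam` is a `v`-weighted mean of `lam / v`, so the oscillation of `lam / v`
bounds the error.
-/

variable {ι : Type*}

section Oscillation

/-- The oscillation `max u - min u` of a finite family of reals, encoded as the diameter of its
range; it measures the distance of `u` from consensus. -/
noncomputable def osc (u : ι → ℝ) : ℝ := Metric.diam (Set.range u)

lemma osc_nonneg (u : ι → ℝ) : 0 ≤ osc u := Metric.diam_nonneg

lemma abs_sub_le_osc [Finite ι] (u : ι → ℝ) (i j : ι) : |u i - u j| ≤ osc u :=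
  Metric.dist_le_diam_of_mem (Set.finite_range u).isBounded (Set.mem_range_self i)
    (Set.mem_range_self j)

lemma osc_le [Nonempty ι] {u : ι → ℝ} {c : ℝ} (h : ∀ i j, u i - u j ≤ c) : osc u ≤ c := by
  refine Metric.diam_le_of_forall_dist_le_of_nonempty (Set.range_nonempty u) ?_
  rintro _ ⟨i, rfl⟩ _ ⟨j, rfl⟩
  exact abs_sub_le_iff.2 ⟨h i j, h j i⟩

lemma osc_le_two_mul [Nonempty ι] {u : ι → ℝ} {c : ℝ} (h : ∀ i, |u i| ≤ c) : osc u ≤ 2 * c :=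
  osc_le fun i j => by linarith [(abs_le.1 (h i)).2, (abs_le.1 (h j)).1]

lemma osc_div_le [Nonempty ι] {u w : ι → ℝ} {c η : ℝ} (hη : 0 < η) (hw : ∀ i, η ≤ w i)
    (hu : ∀ i, |u i| ≤ c) : osc (u / w) ≤ 2 * (c / η) :=
  osc_le_two_mul fun i => by
    rw [Pi.div_apply, abs_div, abs_of_pos (hη.trans_le (hw i))]
    exact div_le_div₀ ((abs_nonneg _).trans (hu i)) (hu i) hη (hw i)

lemma osc_add_le [Finite ι] [Nonempty ι] (u w : ι → ℝ) : osc (u + w) ≤ osc u + osc w :=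
  osc_le fun i j => by
    have hu := (abs_le.1 (abs_sub_le_osc u i j)).2
    have hw := (abs_le.1 (abs_sub_le_osc w i j)).2
    simp only [Pi.add_apply]
    linarith

lemma osc_smul_le [Finite ι] [Nonempty ι] (s : ℝ) (u : ι → ℝ) : osc (s • u) ≤ |s| * osc u :=
  osc_le fun i j => calc
    (s • u) i - (s • u) j = s * (u i - u j) := by simp only [Pi.smul_apply, smul_eq_mul, mul_sub]
    _ ≤ |s| * |u i - u j| := (le_abs_self _).trans_eq (abs_mul _ _)
    _ ≤ |s| * osc u := by gcongr; exact abs_sub_le_osc u i j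

variable [Fintype ι]

lemma abs_sub_weightedMean_le_osc {w : ι → ℝ} (hw : ∀ i, 0 ≤ w i) (hW : 0 < ∑ i, w i)
    (u : ι → ℝ) (i : ι) : |u i - (∑ j, w j * u j) / ∑ j, w j| ≤ osc u := by
  have hdiff : u i - (∑ j, w j * u j) / ∑ j, w j = (∑ j, w j * (u i - u j)) / ∑ j, w j := by
    simp only [mul_sub, Finset.sum_sub_distrib, ← Finset.sum_mul]
    field_simp
  rw [hdiff, abs_div, abs_of_pos hW, div_le_iff₀ hW]
  calc |∑ j, w j * (u i - u j)| ≤ ∑ j, |w j * (u i - u j)| := Finset.abs_sum_le_sum_abs _ _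
    _ ≤ ∑ j, w j * osc u := Finset.sum_le_sum fun j _ => by
        rw [abs_mul, abs_of_nonneg (hw j)]
        exact mul_le_mul_of_nonneg_left (abs_sub_le_osc u i j) (hw j)
    _ = osc u * ∑ j, w j := by rw [← Finset.sum_mul, mul_comm]

variable [DecidableEq ι] {M : Matrix ι ι ℝ}

lemma mulVec_sub_const_apply (hM : M ∈ rowStochastic ℝ ι) (u : ι → ℝ) (c : ℝ) (i : ι) :
    (M *ᵥ u) i - c = ∑ j, M i j * (u j - c) := by
  simp only [mul_sub, Finset.sum_sub_distrib, ← Finset.sum_mul, sum_row_of_mem_rowStochastic hM,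
    one_mul]
  rfl

variable [Nonempty ι]

lemma osc_mulVec_le_of_le_apply (hM : M ∈ rowStochastic ℝ ι) {ε : ℝ} (hε : ∀ i j, ε ≤ M i j)
    (u : ι → ℝ) : osc (M *ᵥ u) ≤ (1 - ε) * osc u := by
  obtain ⟨lo, hlo⟩ := Finite.exists_min u
  obtain ⟨hi, hhi⟩ := Finite.exists_max u
  have hosc : osc u = u hi - u lo :=
    le_antisymm (osc_le fun i j => sub_le_sub (hhi i) (hlo j))
      ((le_abs_self _).trans (abs_sub_le_osc u hi lo))
  have upper (i : ι) : (M *ᵥ u) i - u hi ≤ 0 := by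
    rw [mulVec_sub_const_apply hM]
    exact Finset.sum_nonpos fun j _ =>
      mul_nonpos_of_nonneg_of_nonpos (hM.1 i j) (sub_nonpos.2 (hhi j))
  have lower (i : ι) : ε * (u hi - u lo) ≤ (M *ᵥ u) i - u lo := calc
    ε * (u hi - u lo) ≤ M i hi * (u hi - u lo) :=
      mul_le_mul_of_nonneg_right (hε i hi) (sub_nonneg.2 (hlo hi))
    _ ≤ ∑ j, M i j * (u j - u lo) :=
      Finset.single_le_sum (f := fun j => M i j * (u j - u lo))
        (fun j _ => mul_nonneg (hM.1 i j) (sub_nonneg.2 (hlo j))) (Finset.mem_univ hi)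
    _ = (M *ᵥ u) i - u lo := (mulVec_sub_const_apply hM u (u lo) i).symm
  rw [hosc]
  exact osc_le fun i j => by linarith [upper i, lower j]

lemma osc_mulVec_le (hM : M ∈ rowStochastic ℝ ι) (u : ι → ℝ) : osc (M *ᵥ u) ≤ osc u := by
  simpa only [sub_zero, one_mul] using osc_mulVec_le_of_le_apply hM hM.1 u

end Oscillation

section Reachability

variable {T : ℕ → ι → ι → Prop} {B : ℕ}

/-- Joint strong connectivity of the time-varying digraph `T` (`T k j i` being an edge from `j` to
`i` at time `k`): the union of its edges over each window `[kB, (k+1)B)` is strongly connected. -/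
def WindowConnected (T : ℕ → ι → ι → Prop) (B : ℕ) : Prop :=
  ∀ k : ℕ, ∀ i j : ι,
    Relation.ReflTransGen (fun u w => ∃ l, k * B ≤ l ∧ l < (k + 1) * B ∧ T l u w) i j

lemma WindowConnected.shift (hT : WindowConnected T B) (m : ℕ) :
    WindowConnected (fun k => T (m * B + k)) B := by
  refine fun k i j => Relation.ReflTransGen.mono ?_ _ _ (hT (m + k) i j)
  rintro u w ⟨l, hl, hl', hlT⟩
  rw [add_mul] at hl
  rw [add_assoc, add_mul] at hl'
  obtain ⟨r, rfl⟩ := Nat.exists_eq_add_of_le (le_of_add_le_left hl)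
  exact ⟨r, by omega, by omega, hlT⟩

lemma WindowConnected.eq_univ_of_subset (hT : WindowConnected T B) {R : ℕ → Set ι}
    (hmono : Monotone R) (hedge : ∀ k i j, T k j i → j ∈ R k → i ∈ R (k + 1)) {k : ℕ}
    (hne : (R (k * B)).Nonempty) (hsub : R ((k + 1) * B) ⊆ R (k * B)) :
    R (k * B) = Set.univ := by
  obtain ⟨j, hj⟩ := hne
  refine Set.eq_univ_of_forall fun i => ?_
  induction hT k j i with
  | refl => exact hj
  | tail _ hlast ih =>
    obtain ⟨l, hl, hl', hlT⟩ := hlast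
    exact hsub (hmono hl' (hedge l _ _ hlT (hmono hl ih)))

lemma WindowConnected.eq_univ_at_card_mul [Fintype ι] (hT : WindowConnected T B) {R : ℕ → Set ι}
    (hmono : Monotone R) (hedge : ∀ k i j, T k j i → j ∈ R k → i ∈ R (k + 1))
    (hne : (R 0).Nonempty) : R (Fintype.card ι * B) = Set.univ := by
  have hle (k : ℕ) : R (k * B) ⊆ R ((k + 1) * B) :=
    hmono (Nat.mul_le_mul_right B k.le_succ)
  have hgrow : ∀ k ≤ Fintype.card ι, k ≤ (R (k * B)).ncard := by
    intro k
    induction k with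
    | zero => exact fun _ => Nat.zero_le _
    | succ k ih =>
      intro hk
      by_cases hsub : R ((k + 1) * B) ⊆ R (k * B)
      · have huniv := hT.eq_univ_of_subset hmono hedge (hne.mono (hmono (Nat.zero_le _))) hsub
        have huniv' : R ((k + 1) * B) = Set.univ := Set.univ_subset_iff.1 (huniv.ge.trans (hle k))
        rwa [huniv', Set.ncard_univ, Nat.card_eq_fintype_card]
      · exact (ih (by omega)).trans_lt (Set.ncard_lt_ncard ⟨hle k, hsub⟩)
  rw [Set.eq_univ_iff_ncard, Nat.card_eq_fintype_card]
  exact le_antisymm ((Set.ncard_le_card _).trans_eq Nat.card_eq_fintype_card) (hgrow _ le_rfl)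

end Reachability

section BackwardProduct

/-- The backward product `A (k - 1) * ⋯ * A 1 * A 0`, the transition matrix over `[0, k)` of the
recursion `u (k + 1) = A k *ᵥ u k`. -/
def backwardProd {M : Type*} [Monoid M] (A : ℕ → M) : ℕ → M
  | 0 => 1
  | k + 1 => A k * backwardProd A k

lemma backwardProd_mem {M : Type*} [Monoid M] {N : Submonoid M} {A : ℕ → M} (hA : ∀ k, A k ∈ N)
    (k : ℕ) : backwardProd A k ∈ N := by
  induction k with
  | zero => exact N.one_mem
  | succ k ih => exact N.mul_mem (hA k) ih

/-- The matrices `A k` put weight at least `c` on the edges of the digraphs `T k` and on all self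
loops; as `A k` acts on column vectors, the edge from `j` to `i` has weight `A k i j`. -/
def HasWeightFloor (T : ℕ → ι → ι → Prop) (c : ℝ) (A : ℕ → Matrix ι ι ℝ) : Prop :=
  ∀ k i j, T k j i ∨ j = i → c ≤ A k i j

variable [Fintype ι] [DecidableEq ι] {A : ℕ → Matrix ι ι ℝ} {T : ℕ → ι → ι → Prop} {B : ℕ} {c : ℝ}

lemma eq_backwardProd_mulVec {u : ℕ → ι → ℝ} (hu : ∀ k, u (k + 1) = A k *ᵥ u k) (k : ℕ) :
    u k = backwardProd A k *ᵥ u 0 := by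
  induction k with
  | zero => exact (one_mulVec _).symm
  | succ k ih => rw [hu, ih, mulVec_mulVec, backwardProd]

lemma backwardProd_apply_nonneg (hA : ∀ k i j, 0 ≤ A k i j) (k : ℕ) (i j : ι) :
    0 ≤ backwardProd A k i j := by
  induction k generalizing i with
  | zero => exact (mem_rowStochastic.1 (rowStochastic ℝ ι).one_mem).1 i j
  | succ k ih => exact Finset.sum_nonneg fun l _ => mul_nonneg (hA k i l) (ih l)

lemma HasWeightFloor.pow_succ_le_backwardProd (hc : 0 ≤ c) (hA : ∀ k i j, 0 ≤ A k i j)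
    (hAT : HasWeightFloor T c A) {k : ℕ} {i l j : ι} (hli : T k l i ∨ l = i)
    (hl : c ^ k ≤ backwardProd A k l j) : c ^ (k + 1) ≤ backwardProd A (k + 1) i j := calc
  c ^ (k + 1) = c * c ^ k := pow_succ' c k
  _ ≤ A k i l * backwardProd A k l j :=
    mul_le_mul (hAT k i l hli) hl (pow_nonneg hc k) (hA k i l)
  _ ≤ backwardProd A (k + 1) i j :=
    Finset.single_le_sum (f := fun l => A k i l * backwardProd A k l j)
      (fun l _ => mul_nonneg (hA k i l) (backwardProd_apply_nonneg hA k l j)) (Finset.mem_univ l)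

lemma HasWeightFloor.pow_le_backwardProd_self (hc : 0 ≤ c) (hA : ∀ k i j, 0 ≤ A k i j)
    (hAT : HasWeightFloor T c A) (k : ℕ) (i : ι) : c ^ k ≤ backwardProd A k i i := by
  induction k with
  | zero => exact (one_apply_eq i).ge
  | succ k ih => exact hAT.pow_succ_le_backwardProd hc hA (Or.inr rfl) ih

lemma HasWeightFloor.pow_le_backwardProd (hc : 0 ≤ c) (hA : ∀ k i j, 0 ≤ A k i j)
    (hAT : HasWeightFloor T c A) (hT : WindowConnected T B) {k : ℕ} (hk : Fintype.card ι * B ≤ k)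
    (i j : ι) : c ^ k ≤ backwardProd A k i j := by
  let R : ℕ → Set ι := fun k => {i | c ^ k ≤ backwardProd A k i j}
  have hmono : Monotone R :=
    monotone_nat_of_le_succ fun k i hi => hAT.pow_succ_le_backwardProd hc hA (Or.inr rfl) hi
  have hfull : R (Fintype.card ι * B) = Set.univ :=
    hT.eq_univ_at_card_mul hmono
      (fun k i l hli hl => hAT.pow_succ_le_backwardProd hc hA (Or.inl hli) hl)
      ⟨j, hAT.pow_le_backwardProd_self hc hA 0 j⟩
  exact hmono hk (hfull ▸ Set.mem_univ i)

end BackwardProduct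

section GeometricDecay

lemma exists_pow_eq_of_mem_Ioo {L : ℕ} (hL : 0 < L) {b : ℝ} (hb : b ∈ Set.Ioo (0 : ℝ) 1) :
    ∃ a ∈ Set.Ioo (0 : ℝ) 1, a ^ L = b :=
  ⟨b ^ (L⁻¹ : ℝ), ⟨Real.rpow_pos_of_pos hb.1 _,
    Real.rpow_lt_one hb.1.le hb.2 (inv_pos.2 (Nat.cast_pos.2 hL))⟩,
    Real.rpow_inv_natCast_pow hb.1.le hL.ne'⟩

lemma le_add_sum_range {S D : ℕ → ℝ} (h : ∀ k, S (k + 1) ≤ S k + D k) (k : ℕ) :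
    S k ≤ S 0 + ∑ i ∈ Finset.range k, D i := by
  have hsum : ∑ i ∈ Finset.range k, (S (i + 1) - S i) ≤ ∑ i ∈ Finset.range k, D i :=
    Finset.sum_le_sum fun i _ => sub_le_iff_le_add'.2 (h i)
  rw [Finset.sum_range_sub] at hsum
  linarith

variable {a G : ℝ} {D S : ℕ → ℝ} {L : ℕ}

lemma sum_range_le_pow_mul (ha : a ∈ Set.Ioo (0 : ℝ) 1) (hG : 0 ≤ G) {t r : ℕ}
    (hD : ∀ i < t + r, D i ≤ a ^ i * G) :
    ∑ i ∈ Finset.range r, D (t + i) ≤ a ^ t * (r * G) := calc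
  ∑ i ∈ Finset.range r, D (t + i) ≤ ∑ _i ∈ Finset.range r, a ^ t * G := by
    refine Finset.sum_le_sum fun i hi => ?_
    refine (hD (t + i) (Nat.add_lt_add_left (Finset.mem_range.1 hi) t)).trans ?_
    exact mul_le_mul_of_nonneg_right
      (pow_le_pow_of_le_one ha.1.le ha.2.le (Nat.le_add_right t i)) hG
  _ = a ^ t * (r * G) := by rw [Finset.sum_const, Finset.card_range, nsmul_eq_mul]; ring

lemma le_pow_mul_at_blocks {δ : ℝ} (hδ : δ ∈ Set.Ioc (0 : ℝ) 1) (ha : a ∈ Set.Ioo (0 : ℝ) 1)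
    (haL : a ^ L = 1 - δ / 2) (hS0 : 0 ≤ S 0)
    (hblock : ∀ j, S (j * L + L) ≤
      (1 - δ) * S (j * L) + ∑ i ∈ Finset.range L, D (j * L + i))
    (hG : 0 ≤ G) (j : ℕ) (hD : ∀ i < j * L, D i ≤ a ^ i * G) :
    S (j * L) ≤ a ^ (j * L) * (S 0 + 2 * L / δ * G) := by
  obtain ⟨hδ0, hδ1⟩ := hδ
  induction j with
  | zero =>
    rw [zero_mul, pow_zero, one_mul]
    exact le_add_of_nonneg_right (by positivity)
  | succ j ih =>
    rw [Nat.succ_mul] at hD ⊢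
    set H := S 0 + 2 * L / δ * G with hH
    have habsorb : L * G ≤ δ / 2 * H := by
      have hexpand : δ / 2 * H = δ / 2 * S 0 + L * G := by rw [hH]; field_simp
      rw [hexpand]
      exact le_add_of_nonneg_left (by positivity)
    have hprev := mul_le_mul_of_nonneg_left
      (ih fun i hi => hD i (Nat.lt_add_right L hi)) (sub_nonneg.2 hδ1)
    have hpow : 0 ≤ a ^ (j * L) := pow_nonneg ha.1.le _
    calc S (j * L + L)
        ≤ (1 - δ) * (a ^ (j * L) * H) + a ^ (j * L) * (L * G) :=
          (hblock j).trans (add_le_add hprev (sum_range_le_pow_mul ha hG hD))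
      _ ≤ (1 - δ) * (a ^ (j * L) * H) + a ^ (j * L) * (δ / 2 * H) := by gcongr
      _ = a ^ (j * L + L) * H := by rw [pow_add, haL]; ring

lemma exists_geometric_bound_of_block_contraction (hL : 0 < L) {δ : ℝ}
    (hδ : δ ∈ Set.Ioc (0 : ℝ) 1) :
    ∃ a ∈ Set.Ioo (0 : ℝ) 1, ∃ C > (0 : ℝ), ∀ S D : ℕ → ℝ, (∀ k, 0 ≤ S k) →
      (∀ k, S (k + 1) ≤ S k + D k) →
      (∀ j, S (j * L + L) ≤ (1 - δ) * S (j * L) + ∑ i ∈ Finset.range L, D (j * L + i)) →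
      ∀ (k : ℕ) (G : ℝ), 0 ≤ G → (∀ i < k, D i ≤ a ^ i * G) →
        S k ≤ a ^ k * (C * (S 0 + G)) := by
  have hδ0 := hδ.1
  obtain ⟨a, ha, haL⟩ := exists_pow_eq_of_mem_Ioo hL (b := 1 - δ / 2)
    ⟨by linarith [hδ.2], by linarith⟩
  refine ⟨a, ha, 2 * (1 + 2 * L / δ + L), by positivity,
    fun S D hS hstep hblock k G hG hD => ?_⟩
  obtain ⟨j, r, hr, rfl⟩ : ∃ j r, r < L ∧ k = j * L + r :=
    ⟨k / L, k % L, Nat.mod_lt k hL, (Nat.div_add_mod' k L).symm⟩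
  have hstart := le_pow_mul_at_blocks hδ ha haL (hS 0) hblock hG j
    fun i hi => hD i (Nat.lt_add_right r hi)
  have hrest := le_add_sum_range (S := fun i => S (j * L + i)) (fun i => hstep (j * L + i)) r
  have hsum := sum_range_le_pow_mul ha hG hD
  have hpow : 0 ≤ a ^ (j * L) := pow_nonneg ha.1.le _
  have hhalf : 1 ≤ 2 * a ^ r := by
    linarith [pow_le_pow_of_le_one ha.1.le ha.2.le hr.le, hδ.2]
  have hconst : S 0 + 2 * L / δ * G + r * G ≤ (1 + 2 * L / δ + L) * (S 0 + G) := by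
    have hrG : (r : ℝ) * G ≤ L * G := by gcongr
    have hcross : 0 ≤ (2 * L / δ + L) * S 0 := mul_nonneg (by positivity) (hS 0)
    linarith
  have hS0 := hS 0
  calc S (j * L + r) ≤ a ^ (j * L) * (S 0 + 2 * L / δ * G + r * G) := by
        rw [add_zero] at hrest
        linarith
    _ ≤ a ^ (j * L) * ((1 + 2 * L / δ + L) * (S 0 + G)) := by gcongr
    _ ≤ a ^ (j * L) * ((2 * a ^ r) * ((1 + 2 * L / δ + L) * (S 0 + G))) := by
        exact mul_le_mul_of_nonneg_left (le_mul_of_one_le_left (by positivity) hhalf) hpow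
    _ = a ^ (j * L + r) * (2 * (1 + 2 * L / δ + L) * (S 0 + G)) := by rw [pow_add]; ring

end GeometricDecay

section Consensus

variable [Fintype ι] [DecidableEq ι] [Nonempty ι] {T : ℕ → ι → ι → Prop} {B : ℕ} {q : ℝ}
  {Q : ℕ → Matrix ι ι ℝ} {u d : ℕ → ι → ℝ}

lemma osc_le_add_of_consensus_step (hQ : ∀ k, Q k ∈ rowStochastic ℝ ι)
    (hu : ∀ k, u (k + 1) = Q k *ᵥ u k + d k) (k : ℕ) :
    osc (u (k + 1)) ≤ osc (u k) + osc (d k) := by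
  rw [hu]
  exact (osc_add_le _ _).trans (add_le_add_left (osc_mulVec_le (hQ k) _) _)

lemma osc_sub_backwardProd_mulVec_le (hQ : ∀ k, Q k ∈ rowStochastic ℝ ι)
    (hu : ∀ k, u (k + 1) = Q k *ᵥ u k + d k) (k : ℕ) :
    osc (u k - backwardProd Q k *ᵥ u 0) ≤ ∑ i ∈ Finset.range k, osc (d i) := by
  have hdev (k : ℕ) : u (k + 1) - backwardProd Q (k + 1) *ᵥ u 0 =
      Q k *ᵥ (u k - backwardProd Q k *ᵥ u 0) + d k := by
    rw [hu, mulVec_sub, mulVec_mulVec, backwardProd]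
    abel
  have hstep := osc_le_add_of_consensus_step
    (u := fun k => u k - backwardProd Q k *ᵥ u 0) hQ hdev
  have hbound := le_add_sum_range
    (S := fun k => osc (u k - backwardProd Q k *ᵥ u 0)) (D := fun k => osc (d k)) hstep k
  have hzero : osc (u 0 - backwardProd Q 0 *ᵥ u 0) = 0 := by
    rw [backwardProd, one_mulVec, sub_self]
    exact le_antisymm (osc_le fun _ _ => (sub_self _).le) (osc_nonneg _)
  rwa [hzero, zero_add] at hbound

lemma osc_contraction (hT : WindowConnected T B) (hq : 0 ≤ q)
    (hQ : ∀ k, Q k ∈ rowStochastic ℝ ι) (hQT : HasWeightFloor T q Q)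
    (hu : ∀ k, u (k + 1) = Q k *ᵥ u k + d k) :
    osc (u (Fintype.card ι * B)) ≤ (1 - q ^ (Fintype.card ι * B)) * osc (u 0) +
      ∑ i ∈ Finset.range (Fintype.card ι * B), osc (d i) := by
  set L := Fintype.card ι * B with hL
  calc osc (u L) = osc (backwardProd Q L *ᵥ u 0 + (u L - backwardProd Q L *ᵥ u 0)) := by
        rw [add_sub_cancel]
    _ ≤ osc (backwardProd Q L *ᵥ u 0) + osc (u L - backwardProd Q L *ᵥ u 0) := osc_add_le _ _
    _ ≤ (1 - q ^ L) * osc (u 0) + ∑ i ∈ Finset.range L, osc (d i) :=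
        add_le_add
          (osc_mulVec_le_of_le_apply (backwardProd_mem hQ L)
            (hQT.pow_le_backwardProd hq (fun k => (hQ k).1) hT hL.ge) (u 0))
          (osc_sub_backwardProd_mulVec_le hQ hu L)

theorem exists_geometric_consensus (hT : WindowConnected T B) (hB : 0 < B)
    (hq : q ∈ Set.Ioc (0 : ℝ) 1) :
    ∃ a ∈ Set.Ioo (0 : ℝ) 1, ∃ C > (0 : ℝ), ∀ Q : ℕ → Matrix ι ι ℝ,
      (∀ k, Q k ∈ rowStochastic ℝ ι) → HasWeightFloor T q Q →
      ∀ u d : ℕ → ι → ℝ, (∀ k, u (k + 1) = Q k *ᵥ u k + d k) →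
      ∀ (k : ℕ) (G : ℝ), 0 ≤ G → (∀ i < k, osc (d i) ≤ a ^ i * G) →
        osc (u k) ≤ a ^ k * (C * (osc (u 0) + G)) := by
  obtain ⟨a, ha, C, hC, hdecay⟩ := exists_geometric_bound_of_block_contraction
    (Nat.mul_pos Fintype.card_pos hB : 0 < Fintype.card ι * B)
    (δ := q ^ (Fintype.card ι * B)) ⟨pow_pos hq.1 _, pow_le_one₀ hq.1.le hq.2⟩
  refine ⟨a, ha, C, hC, fun Q hQ hQT u d hu => hdecay (fun k => osc (u k)) (fun k => osc (d k))
    (fun k => osc_nonneg _) (osc_le_add_of_consensus_step hQ hu) fun j => ?_⟩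
  rw [← mul_assoc]
  set t := j * Fintype.card ι * B
  exact osc_contraction (u := fun k => u (t + k)) (hT.shift _) hq.1.le (fun k => hQ (t + k))
    (fun k => hQT (t + k)) (fun k => hu (t + k))

theorem exists_geometric_cascade (hT : WindowConnected T B) (hB : 0 < B)
    (hq : q ∈ Set.Ioc (0 : ℝ) 1) :
    ∃ a ∈ Set.Ioo (0 : ℝ) 1, ∃ C > (0 : ℝ), ∀ Q : ℕ → Matrix ι ι ℝ,
      (∀ k, Q k ∈ rowStochastic ℝ ι) → HasWeightFloor T q Q →
      ∀ s ≥ (0 : ℝ), ∀ u h d : ℕ → ι → ℝ, (∀ k, u (k + 1) = Q k *ᵥ (u k - s • h k)) →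
      (∀ k, h (k + 1) = Q k *ᵥ h k + d k) →
      ∀ (k : ℕ) (G : ℝ), 0 ≤ G → (∀ i < k, osc (d i) ≤ a ^ i * G) →
        osc (u k) ≤ a ^ k * (C * (osc (u 0) + s * (C * (osc (h 0) + G)))) := by
  obtain ⟨a, ha, C, hC, hcons⟩ := exists_geometric_consensus hT hB hq
  refine ⟨a, ha, C, hC, fun Q hQ hQT s hs u h d hu hh k G hG hd => ?_⟩
  have hh0 := osc_nonneg (h 0)
  have hu' (k : ℕ) : u (k + 1) = Q k *ᵥ u k + Q k *ᵥ (-s • h k) := by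
    rw [hu, ← mulVec_add, neg_smul, sub_eq_add_neg]
  refine hcons Q hQ hQT u _ hu' k _ (by positivity) fun i hi => ?_
  calc osc (Q i *ᵥ (-s • h i)) ≤ |-s| * osc (h i) :=
        (osc_mulVec_le (hQ i) _).trans (osc_smul_le _ _)
    _ ≤ s * (a ^ i * (C * (osc (h 0) + G))) := by
        rw [abs_neg, abs_of_nonneg hs]
        gcongr
        exact hcons Q hQ hQT h d hh i G hG fun l hl => hd l (hl.trans hi)
    _ = a ^ i * (s * (C * (osc (h 0) + G))) := by ring

end Consensus

section PushSum

/-- The matrix `diag(w)⁻¹ A diag(v)`, which transports `x / v` to `(A x) / w`; for push-sum weights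
`v` and `w = A v` it is the row-stochastic matrix driving the ratios. -/
noncomputable def ratioMatrix (A : Matrix ι ι ℝ) (v w : ι → ℝ) : Matrix ι ι ℝ :=
  Matrix.of fun i j => A i j * v j / w i

lemma HasWeightFloor.ratioMatrix {T : ℕ → ι → ι → Prop} {A : ℕ → Matrix ι ι ℝ} {u : ℕ → ι → ℝ}
    {c η N : ℝ} (hA : ∀ k i j, 0 ≤ A k i j) (hAT : HasWeightFloor T c A) (hη : 0 < η)
    (hηu : ∀ k i, η ≤ u k i) (huN : ∀ k i, u k i ≤ N) :
    HasWeightFloor T (c * η / N) fun k => ratioMatrix (A k) (u k) (u (k + 1)) := by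
  intro k i j hji
  have hupos (k : ℕ) (i : ι) : 0 < u k i := hη.trans_le (hηu k i)
  exact div_le_div₀ (mul_nonneg (hA k i j) (hupos k j).le)
    (mul_le_mul (hAT k i j hji) (hηu k j) hη.le (hA k i j)) (hupos _ i) (huN _ i)

variable [Fintype ι]

lemma ratioMatrix_mulVec_div {v : ι → ℝ} (hv : ∀ i, v i ≠ 0) (A : Matrix ι ι ℝ) (w x : ι → ℝ) :
    ratioMatrix A v w *ᵥ (x / v) = (A *ᵥ x) / w := by
  funext i
  simp only [mulVec, dotProduct, Pi.div_apply, Finset.sum_div, ratioMatrix, of_apply]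
  refine Finset.sum_congr rfl fun j _ => ?_
  rw [div_mul_div_comm, mul_right_comm, mul_div_mul_right _ _ (hv j)]

variable {T : ℕ → ι → ι → Prop} {B : ℕ} {c : ℝ} {A P : ℕ → Matrix ι ι ℝ}
  {u v : ℕ → ι → ℝ}

lemma HasWeightFloor.pow_mul_le_of_mulVec (hc : 0 ≤ c) (hA : ∀ k i j, 0 ≤ A k i j)
    (hAT : HasWeightFloor T c A) (hu0 : ∀ i, 0 ≤ u 0 i) (hu : ∀ k, u (k + 1) = A k *ᵥ u k)
    (k : ℕ) (i : ι) : c ^ k * u 0 i ≤ u k i := by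
  classical
  rw [eq_backwardProd_mulVec hu k]
  refine (mul_le_mul_of_nonneg_right (hAT.pow_le_backwardProd_self hc hA k i) (hu0 i)).trans ?_
  exact Finset.single_le_sum (f := fun j => backwardProd A k i j * u 0 j)
    (fun j _ => mul_nonneg (backwardProd_apply_nonneg hA k i j) (hu0 j)) (Finset.mem_univ i)

lemma HasWeightFloor.pow_mul_sum_le_of_mulVec (hc : 0 ≤ c) (hA : ∀ k i j, 0 ≤ A k i j)
    (hAT : HasWeightFloor T c A) (hT : WindowConnected T B) (hu0 : ∀ i, 0 ≤ u 0 i)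
    (hu : ∀ k, u (k + 1) = A k *ᵥ u k) {k : ℕ} (hk : Fintype.card ι * B ≤ k) (i : ι) :
    c ^ k * ∑ j, u 0 j ≤ u k i := by
  classical
  rw [eq_backwardProd_mulVec hu k, Finset.mul_sum]
  exact Finset.sum_le_sum fun j _ =>
    mul_le_mul_of_nonneg_right (hAT.pow_le_backwardProd hc hA hT hk i j) (hu0 j)

variable [DecidableEq ι]

lemma ratioMatrix_mem_rowStochastic {A : Matrix ι ι ℝ} {v w : ι → ℝ} (hA : ∀ i j, 0 ≤ A i j)
    (hv : ∀ i, 0 ≤ v i) (hw : ∀ i, 0 < w i) (hAv : A *ᵥ v = w) :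
    ratioMatrix A v w ∈ rowStochastic ℝ ι := by
  refine mem_rowStochastic_iff_sum.2
    ⟨fun i j => div_nonneg (mul_nonneg (hA i j) (hv j)) (hw i).le, fun i => ?_⟩
  simp only [ratioMatrix, of_apply, ← Finset.sum_div]
  rw [show ∑ j, A i j * v j = w i from congrFun hAv i, div_self (hw i).ne']

lemma sum_pushSumWeight (hP : ∀ k, P k ∈ colStochastic ℝ ι) (hv0 : v 0 = 1)
    (hv : ∀ k, v (k + 1) = P k *ᵥ v k) (k : ℕ) : ∑ i, v k i = Fintype.card ι := by
  rw [eq_backwardProd_mulVec hv k, sum_mulVec_of_mem_colStochastic (backwardProd_mem hP k), hv0]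
  simp only [Pi.one_apply, Finset.sum_const, Finset.card_univ, nsmul_eq_mul, mul_one]

lemma pushSumWeight_nonneg (hP : ∀ k, P k ∈ colStochastic ℝ ι) (hv0 : v 0 = 1)
    (hv : ∀ k, v (k + 1) = P k *ᵥ v k) (k : ℕ) (i : ι) : 0 ≤ v k i := by
  rw [eq_backwardProd_mulVec hv k]
  exact nonneg_mulVec_of_mem_colStochastic (backwardProd_mem hP k)
    (fun j => hv0 ▸ zero_le_one) i

lemma pushSumWeight_le_card (hP : ∀ k, P k ∈ colStochastic ℝ ι) (hv0 : v 0 = 1)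
    (hv : ∀ k, v (k + 1) = P k *ᵥ v k) (k : ℕ) (i : ι) : v k i ≤ Fintype.card ι := by
  rw [← sum_pushSumWeight hP hv0 hv k]
  exact Finset.single_le_sum (fun j _ => pushSumWeight_nonneg hP hv0 hv k j) (Finset.mem_univ i)

lemma HasWeightFloor.le_one [Nonempty ι] (hA : A 0 ∈ colStochastic ℝ ι)
    (hAT : HasWeightFloor T c A) : c ≤ 1 :=
  let i := Classical.arbitrary ι
  (hAT 0 i i (Or.inr rfl)).trans (le_one_of_mem_colStochastic hA)

lemma pow_le_pushSumWeight (hT : WindowConnected T B) (hB : 0 < B) (hc : 0 < c)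
    (hP : ∀ k, P k ∈ colStochastic ℝ ι) (hPT : HasWeightFloor T c P) (hv0 : v 0 = 1)
    (hv : ∀ k, v (k + 1) = P k *ᵥ v k) (k : ℕ) (i : ι) :
    c ^ ((Fintype.card ι + 1) * B) ≤ v k i := by
  have : Nonempty ι := ⟨i⟩
  have hpow {r : ℕ} (hr : r ≤ (Fintype.card ι + 1) * B) :
      c ^ ((Fintype.card ι + 1) * B) ≤ c ^ r := pow_le_pow_of_le_one hc.le (hPT.le_one (hP 0)) hr
  rw [Nat.succ_mul] at hpow ⊢
  rcases lt_or_ge k (Fintype.card ι * B) with hk | hk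
  · have hself := hPT.pow_mul_le_of_mulVec hc.le (fun k => (hP k).1)
      (pushSumWeight_nonneg hP hv0 hv 0) hv k i
    rw [hv0, Pi.one_apply, mul_one] at hself
    exact (hpow (by omega)).trans hself
  · obtain ⟨j, r, hr, rfl⟩ : ∃ j r, r < B ∧ k = j * B + (Fintype.card ι * B + r) :=
      ⟨(k - Fintype.card ι * B) / B, (k - Fintype.card ι * B) % B, Nat.mod_lt _ hB, by
        have := Nat.div_add_mod' (k - Fintype.card ι * B) B
        omega⟩
    have hsum := HasWeightFloor.pow_mul_sum_le_of_mulVec (u := fun k => v (j * B + k)) hc.le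
      (fun k => (hP (j * B + k)).1) (fun k => hPT (j * B + k)) (hT.shift j)
      (pushSumWeight_nonneg hP hv0 hv _) (fun k => hv (j * B + k))
      (Nat.le_add_right (Fintype.card ι * B) r) i
    rw [add_zero, sum_pushSumWeight hP hv0 hv] at hsum
    have hcard : (1 : ℝ) ≤ Fintype.card ι := Nat.one_le_cast.2 Fintype.card_pos
    exact (hpow (by omega)).trans
      ((le_mul_of_one_le_right (pow_nonneg hc.le _) hcard).trans hsum)

lemma pushSumWeight_pos (hT : WindowConnected T B) (hB : 0 < B) (hc : 0 < c)
    (hP : ∀ k, P k ∈ colStochastic ℝ ι) (hPT : HasWeightFloor T c P) (hv0 : v 0 = 1)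
    (hv : ∀ k, v (k + 1) = P k *ᵥ v k) (k : ℕ) (i : ι) : 0 < v k i :=
  (pow_pos hc _).trans_le (pow_le_pushSumWeight hT hB hc hP hPT hv0 hv k i)

theorem exists_pushSum_gain [Nonempty ι] (hT : WindowConnected T B) (hB : 0 < B) (hc : 0 < c)
    (hP : ∀ k, P k ∈ colStochastic ℝ ι) (hPT : HasWeightFloor T c P) :
    ∃ a ∈ Set.Ioo (0 : ℝ) 1, ∃ α > (0 : ℝ), ∀ s ≥ (0 : ℝ), ∀ v lam y d : ℕ → ι → ℝ, v 0 = 1 →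
      (∀ k, v (k + 1) = P k *ᵥ v k) → (∀ k, lam (k + 1) = P k *ᵥ (lam k - s • y k)) →
      (∀ k, y (k + 1) = P k *ᵥ y k + d k) →
      ∃ β ≥ (0 : ℝ), ∀ (k : ℕ) (G : ℝ), 0 ≤ G → (∀ l < k, ∀ i, |d l i| ≤ a ^ l * G) →
        osc (lam k / v k) ≤ a ^ k * (s * α * G + β) := by
  have hc1 : c ≤ 1 := hPT.le_one (hP 0)
  set η := c ^ ((Fintype.card ι + 1) * B)
  have hη : 0 < η := pow_pos hc _
  have hη1 : η ≤ 1 := pow_le_one₀ hc.le hc1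
  have hcard : (1 : ℝ) ≤ Fintype.card ι := Nat.one_le_cast.2 Fintype.card_pos
  obtain ⟨a, ha, C, hC, hcascade⟩ := exists_geometric_cascade hT hB
    (q := c * η / Fintype.card ι)
    ⟨by positivity, div_le_one_of_le₀ ((mul_le_one₀ hc1 hη.le hη1).trans hcard) (by positivity)⟩
  refine ⟨a, ha, C * (C * (2 / η)), by positivity, fun s hs v lam y d hv0 hv hlam hy => ?_⟩
  have hηv : ∀ k i, η ≤ v k i := pow_le_pushSumWeight hT hB hc hP hPT hv0 hv
  have hvpos := pushSumWeight_pos hT hB hc hP hPT hv0 hv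
  have hQ (k : ℕ) : ratioMatrix (P k) (v k) (v (k + 1)) ∈ rowStochastic ℝ ι :=
    ratioMatrix_mem_rowStochastic (hP k).1 (fun i => (hvpos k i).le) (hvpos (k + 1)) (hv k).symm
  have hQT := hPT.ratioMatrix (fun k => (hP k).1) hη hηv (pushSumWeight_le_card hP hv0 hv)
  have hratio (k : ℕ) := ratioMatrix_mulVec_div (fun i => (hvpos k i).ne') (P k) (v (k + 1))
  have hlamRatio (k : ℕ) : lam (k + 1) / v (k + 1) =
      ratioMatrix (P k) (v k) (v (k + 1)) *ᵥ (lam k / v k - s • (y k / v k)) := by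
    have hdistrib : lam k / v k - s • (y k / v k) = (lam k - s • y k) / v k := by
      funext i
      simp only [Pi.sub_apply, Pi.smul_apply, Pi.div_apply, smul_eq_mul, sub_div, mul_div_assoc]
    rw [hdistrib, hratio, hlam]
  have hyRatio (k : ℕ) : y (k + 1) / v (k + 1) =
      ratioMatrix (P k) (v k) (v (k + 1)) *ᵥ (y k / v k) + d k / v (k + 1) := by
    rw [hratio, hy]
    exact funext fun i => add_div _ _ _
  have hosc0 := osc_nonneg (lam 0 / v 0)
  have hosc0' := osc_nonneg (y 0 / v 0)
  refine ⟨C * (osc (lam 0 / v 0) + s * (C * osc (y 0 / v 0))), by positivity,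
    fun k G hG hd => ?_⟩
  have hdRatio (l : ℕ) (hl : l < k) : osc (d l / v (l + 1)) ≤ a ^ l * (2 / η * G) := calc
    osc (d l / v (l + 1)) ≤ 2 * (a ^ l * G / η) := osc_div_le hη (hηv (l + 1)) (hd l hl)
    _ = a ^ l * (2 / η * G) := by ring
  refine (hcascade _ hQ hQT s hs (fun k => lam k / v k) (fun k => y k / v k)
    (fun k => d k / v (k + 1)) hlamRatio hyRatio k _ (by positivity) hdRatio).trans_eq ?_
  ring

end PushSum

section WeightedNorm

variable {d : ℕ} {a : ℝ}

lemma eunorm_nonneg (x : Fin d → ℝ) : 0 ≤ eunorm x := Real.sqrt_nonneg _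

lemma eunorm_le_sum_abs (x : Fin d → ℝ) : eunorm x ≤ ∑ i, |x i| := by
  refine Real.sqrt_le_iff.2 ⟨Finset.sum_nonneg fun _ _ => abs_nonneg _, ?_⟩
  simpa only [sq_abs] using Finset.sum_sq_le_sq_sum_of_nonneg (s := Finset.univ)
    (f := fun i => |x i|) fun _ _ => abs_nonneg _

lemma abs_le_eunorm (x : Fin d → ℝ) (i : Fin d) : |x i| ≤ eunorm x :=
  Real.abs_le_sqrt
    (Finset.single_le_sum (f := fun i => x i ^ 2) (fun _ _ => sq_nonneg _) (Finset.mem_univ i))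

lemma eunorm_le_eunorm_snoc (x : Fin d → ℝ) (b : ℝ) :
    eunorm x ≤ eunorm (Fin.snoc x b : Fin (d + 1) → ℝ) := by
  refine Real.sqrt_le_sqrt ?_
  simp only [Fin.sum_univ_castSucc, Fin.snoc_castSucc]
  exact le_add_of_nonneg_right (sq_nonneg _)

lemma eunorm_le_pow_mul_wnormSeq (ha : 0 < a) (x : ℕ → Fin d → ℝ) {k K : ℕ} (hk : k ≤ K) :
    eunorm (x k) ≤ a ^ k * wnormSeq a x K := by
  rw [← div_le_iff₀' (pow_pos ha k)]
  exact Finset.le_sup' (fun k => eunorm (x k) / a ^ k) (Finset.mem_range_succ_iff.2 hk)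

lemma wnormSeq_le (ha : 0 < a) {x : ℕ → Fin d → ℝ} {K : ℕ} {b : ℝ}
    (h : ∀ k ≤ K, eunorm (x k) ≤ a ^ k * b) : wnormSeq a x K ≤ b :=
  Finset.sup'_le _ _ fun k hk =>
    (div_le_iff₀' (pow_pos ha k)).2 (h k (Finset.mem_range_succ_iff.1 hk))

lemma wnormSeq_le_eunorm_zero_add (ha : 0 < a) {x : ℕ → Fin d → ℝ} {K : ℕ} {b : ℝ} (hb : 0 ≤ b)
    (h : ∀ k < K, eunorm (x (k + 1)) ≤ a ^ (k + 1) * b) : wnormSeq a x K ≤ eunorm (x 0) + b := by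
  refine wnormSeq_le ha fun k hk => ?_
  cases k with
  | zero => rw [pow_zero, one_mul]; exact le_add_of_nonneg_right hb
  | succ k =>
    exact (h k hk).trans
      (mul_le_mul_of_nonneg_left (le_add_of_nonneg_left (eunorm_nonneg _)) (pow_nonneg ha.le _))

lemma wnormSeq_nonneg (ha : 0 < a) (x : ℕ → Fin d → ℝ) (K : ℕ) : 0 ≤ wnormSeq a x K := by
  have h := (eunorm_nonneg _).trans (eunorm_le_pow_mul_wnormSeq ha x K.zero_le)
  rwa [pow_zero, one_mul] at h

lemma wnormSeq_le_wnormSeq_snoc (ha : 0 < a) (x : ℕ → Fin d → ℝ) (b : ℕ → ℝ) (K : ℕ) :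
    wnormSeq a x K ≤ wnormSeq a (fun k => (Fin.snoc (x k) (b k) : Fin (d + 1) → ℝ)) K :=
  wnormSeq_le ha fun _ hk =>
    (eunorm_le_eunorm_snoc _ (b _)).trans (eunorm_le_pow_mul_wnormSeq ha
      (fun k => (Fin.snoc (x k) (b k) : Fin (d + 1) → ℝ)) hk)

lemma abs_sub_succ_le_wnormSeq (ha : a ∈ Set.Ioo (0 : ℝ) 1) (x : ℕ → Fin d → ℝ) {k K : ℕ}
    (hk : k < K) (i : Fin d) : |x (k + 1) i - x k i| ≤ a ^ k * (2 * wnormSeq a x K) := by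
  have hle {l : ℕ} (hl : l ≤ K) : |x l i| ≤ a ^ l * wnormSeq a x K :=
    (abs_le_eunorm _ i).trans (eunorm_le_pow_mul_wnormSeq ha.1 x hl)
  have hpow : a ^ (k + 1) * wnormSeq a x K ≤ a ^ k * wnormSeq a x K :=
    mul_le_mul_of_nonneg_right (pow_le_pow_of_le_one ha.1.le ha.2.le k.le_succ)
      (wnormSeq_nonneg ha.1 x K)
  calc |x (k + 1) i - x k i| ≤ |x (k + 1) i| + |x k i| := abs_sub _ _
    _ ≤ a ^ (k + 1) * wnormSeq a x K + a ^ k * wnormSeq a x K :=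
        add_le_add (hle hk) (hle hk.le)
    _ ≤ a ^ k * (2 * wnormSeq a x K) := by linarith

lemma eunorm_sub_mean_le {w lam : Fin d → ℝ} (hw : ∀ i, 0 < w i) (hsum : ∑ i, w i = d) :
    eunorm (fun i => lam i / w i - 1 / (d : ℝ) * ∑ j, lam j) ≤ d * osc (lam / w) := by
  have hmean (i : Fin d) : |lam i / w i - 1 / (d : ℝ) * ∑ j, lam j| ≤ osc (lam / w) := by
    have h := abs_sub_weightedMean_le_osc (fun j => (hw j).le)
      (Finset.sum_pos (fun j _ => hw j) ⟨i, Finset.mem_univ i⟩) (lam / w) i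
    simpa only [Pi.div_apply, mul_div_cancel₀ _ (hw _).ne', hsum, one_div_mul_eq_div] using h
  calc _ ≤ ∑ i, |lam i / w i - 1 / (d : ℝ) * ∑ j, lam j| := eunorm_le_sum_abs _
    _ ≤ ∑ _i : Fin d, osc (lam / w) := Finset.sum_le_sum fun i _ => hmean i
    _ = d * osc (lam / w) := by
        rw [Finset.sum_const, Finset.card_univ, Fintype.card_fin, nsmul_eq_mul]

end WeightedNorm

section OutDegree

lemma hasWeightFloor_one_div_of_outDegree_le {T : ℕ → ι → ι → Prop} {D : ℕ → ι → ℕ} {N : ℕ}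
    {P : ℕ → Matrix ι ι ℝ} (hD : ∀ k j, 0 < D k j) (hDN : ∀ k j, D k j ≤ N)
    (hP : ∀ k i j, T k j i ∨ j = i → P k i j = 1 / (D k j : ℝ)) :
    HasWeightFloor T (1 / (N : ℝ)) P := by
  intro k i j hji
  rw [hP k i j hji]
  exact one_div_le_one_div_of_le (Nat.cast_pos.2 (hD k j)) (Nat.cast_le.2 (hDN k j))

lemma nonneg_of_outDegree {R : ι → ι → Prop} {D : ι → ℕ} {M : Matrix ι ι ℝ}
    (hM : ∀ i j, (R j i → M i j = 1 / (D j : ℝ)) ∧ (¬R j i → M i j = 0)) (i j : ι) :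
    0 ≤ M i j := by
  by_cases hR : R j i
  · rw [(hM i j).1 hR]
    positivity
  · exact ((hM i j).2 hR).ge

end OutDegree

theorem stmt11_general {n B : ℕ} (hn : 0 < n) (hB : 0 < B) {T : ℕ → Fin n → Fin n → Prop}
    (hT : WindowConnected T B) {c : ℝ} (hc : 0 < c) {P : ℕ → Matrix (Fin n) (Fin n) ℝ}
    (hP : ∀ k, P k ∈ colStochastic ℝ (Fin n)) (hPT : HasWeightFloor T c P)
    {nhat : ℝ} (hnhat : nhat ≠ 0) :
    ∃ a ∈ Set.Ioo (0 : ℝ) 1, ∃ α > (0 : ℝ), ∀ s ≥ (0 : ℝ), ∀ (pstar : Fin n → ℝ)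
      (p lam v x y : ℕ → Fin n → ℝ),
      (∀ i, v 0 i = 1) →
      (∀ k, lam (k + 1) = P k *ᵥ (lam k - s • y k)) →
      (∀ k, v (k + 1) = P k *ᵥ v k) →
      (∀ k i, x (k + 1) i = lam (k + 1) i / v (k + 1) i) →
      (∀ k, y (k + 1) = P k *ᵥ y k + nhat • (p (k + 1) - p k)) →
      ∃ β ≥ (0 : ℝ), ∀ K : ℕ,
        wnormSeq a (fun k i => x k i - (1 / (n : ℝ)) * ∑ j, lam k j) K ≤
          s * α * wnormSeq a (fun k i => p k i - pstar i) K + β := by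
  have : Nonempty (Fin n) := ⟨⟨0, hn⟩⟩
  obtain ⟨a, ha, α, hα, hgain⟩ := exists_pushSum_gain hT hB hc hP hPT
  refine ⟨a, ha, n * α * (|nhat| * 2), by positivity,
    fun s hs pstar p lam v x y hv0 hlam hv hx hy => ?_⟩
  replace hv0 : v 0 = 1 := funext hv0
  obtain ⟨β, hβ, hosc⟩ := hgain s hs v lam y _ hv0 hv hlam hy
  set e : ℕ → Fin n → ℝ := fun k i => x k i - (1 / (n : ℝ)) * ∑ j, lam k j
  have he0 : 0 ≤ eunorm (e 0) := eunorm_nonneg (e 0)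
  refine ⟨eunorm (e 0) + n * β, by positivity, fun K => ?_⟩
  set Z := wnormSeq a (fun k i => p k i - pstar i) K
  have hZ : 0 ≤ Z := wnormSeq_nonneg ha.1 _ K
  have hd (l : ℕ) (hl : l < K) (i : Fin n) :
      |(nhat • (p (l + 1) - p l)) i| ≤ a ^ l * (|nhat| * (2 * Z)) := calc
    |(nhat • (p (l + 1) - p l)) i| = |nhat| * |p (l + 1) i - p l i| := abs_mul _ _
    _ ≤ |nhat| * (a ^ l * (2 * Z)) := by
      have h := abs_sub_succ_le_wnormSeq ha (fun k i => p k i - pstar i) hl i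
      rw [sub_sub_sub_cancel_right] at h
      gcongr
    _ = a ^ l * (|nhat| * (2 * Z)) := mul_left_comm _ _ _
  have he (k : ℕ) (hk : k < K) : eunorm (e (k + 1)) ≤
      a ^ (k + 1) * (n * (s * α * (|nhat| * (2 * Z)) + β)) := calc
    eunorm (e (k + 1)) ≤ n * osc (lam (k + 1) / v (k + 1)) := by
      simp only [e, hx]
      exact eunorm_sub_mean_le (pushSumWeight_pos hT hB hc hP hPT hv0 hv (k + 1))
        ((sum_pushSumWeight hP hv0 hv (k + 1)).trans (by rw [Fintype.card_fin]))
    _ ≤ n * (a ^ (k + 1) * (s * α * (|nhat| * (2 * Z)) + β)) := by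
      gcongr
      exact hosc (k + 1) _ (by positivity) fun l hl => hd l (hl.trans_le hk)
    _ = a ^ (k + 1) * (n * (s * α * (|nhat| * (2 * Z)) + β)) := mul_left_comm _ _ _
  exact (wnormSeq_le_eunorm_zero_add ha.1 (by positivity) he).trans_eq (by ring)

/-- Proposition 5: the disturbance system over time-varying directed graphs
is finite-gain stable.  `T k j i` means that node `j` transmits to node `i`
during time interval `k`, and `D k j` is the instantaneous out-degree of node
`j` (including itself). -/
theorem stmt11 {n : ℕ} (hn : 0 < n) (m : ℝ) (hm : 0 < m)
    (f : Fin n → ℝ → ℝ) (pl pu ℓ : Fin n → ℝ) (hbox : ∀ i, pl i ≤ pu i)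
    (hf : ∀ i, ContDiff ℝ 2 (f i))
    (hsc : ∀ i, ∀ x ∈ Set.Icc (pl i) (pu i), m ≤ iteratedDeriv 2 (f i) x)
    (nhat : ℝ) (hnhat : 0 < nhat) (ξ : ℝ) (hξ : ξ ∈ Set.Ioc (0 : ℝ) ((n : ℝ) / nhat))
    -- the time-varying directed communication graph and the column-stochastic matrices
    (T : ℕ → Fin n → Fin n → Prop) (hTirrefl : ∀ k j, ¬ T k j j)
    (D : ℕ → Fin n → ℕ)
    (hDdef : ∀ k j, D k j = Nat.card {i : Fin n // T k j i} + 1)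
    (hDle : ∀ k j, D k j ≤ n)
    (P : ℕ → Matrix (Fin n) (Fin n) ℝ)
    (hPdef : ∀ k i j, (T k j i ∨ j = i → P k i j = 1 / (D k j : ℝ)) ∧
        (¬ (T k j i ∨ j = i) → P k i j = 0))
    (hPcol : ∀ k j, ∑ i, P k i j = 1)
    -- B-window strong connectivity
    (B : ℕ) (hB : 0 < B)
    (hconn : ∀ k : ℕ, ∀ i j : Fin n,
      Relation.ReflTransGen (fun u w => ∃ l, k * B ≤ l ∧ l < (k + 1) * B ∧ T l u w) i j)
    -- the equilibrium of the nominal system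
    (pstar : Fin n → ℝ) (lamstar : ℝ)
    (heq : ∀ s : ℝ, 0 < s → ∀ i,
      pstar i = projI (pl i) (pu i)
        (pstar i - s * deriv (f i) (pstar i) + s * ξ * (nhat / (n : ℝ)) * lamstar))
    (hbal : ∑ i, (pstar i - ℓ i) = 0) :
    ∃ a ∈ Set.Ioo (0 : ℝ) 1, ∃ sbar > (0 : ℝ), ∃ α2 > (0 : ℝ),
      ∀ s ∈ Set.Ioo (0 : ℝ) sbar,
        ∀ p lam v x y : ℕ → Fin n → ℝ,
          (∀ i, v 0 i = 1) →
          (∀ i, y 0 i = nhat * (p 0 i - ℓ i)) →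
          (∀ (k : ℕ) (i : Fin n), p (k + 1) i = projI (pl i) (pu i)
              (p k i - s * deriv (f i) (p k i) + s * ξ * x k i)) →
          (∀ k : ℕ, lam (k + 1) = P k *ᵥ (lam k - s • y k)) →
          (∀ k : ℕ, v (k + 1) = P k *ᵥ v k) →
          (∀ (k : ℕ) (i : Fin n), x (k + 1) i = lam (k + 1) i / v (k + 1) i) →
          (∀ k : ℕ, y (k + 1) = P k *ᵥ y k + nhat • (p (k + 1) - p k)) →
          ∃ β2 ≥ (0 : ℝ), ∀ K : ℕ,
            wnormSeq a (fun k i => x k i - (1 / (n : ℝ)) * ∑ j, lam k j) K ≤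
              s * α2 *
                  wnormSeq a
                    (fun k => Fin.snoc (fun i => p k i - pstar i)
                      ((1 / nhat) * (∑ j, lam k j) - lamstar)) K +
                β2 := by
  obtain ⟨a, ha, α, hα, hgain⟩ := stmt11_general hn hB hconn
    (one_div_pos.2 (Nat.cast_pos.2 hn))
    (fun k => mem_colStochastic_iff_sum.2 ⟨nonneg_of_outDegree fun i j => hPdef k i j, hPcol k⟩)
    (hasWeightFloor_one_div_of_outDegree_le (fun k j => hDdef k j ▸ Nat.succ_pos _) hDle
      fun k i j => (hPdef k i j).1) hnhat.ne'
  refine ⟨a, ha, 1, one_pos, α, hα, fun s hs p lam v x y hv0 _ _ hlam hv hx hy => ?_⟩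
  obtain ⟨β, hβ, hbound⟩ := hgain s hs.1.le pstar p lam v x y hv0 hlam hv hx hy
  refine ⟨β, hβ, fun K => (hbound K).trans ?_⟩
  gcongr
  · exact mul_nonneg hs.1.le hα.le
  · exact wnormSeq_le_wnormSeq_snoc ha.1 _ _ K
end
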